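/- Fix x ≥ 1 and let q♯(t) = F_q(t, 0, 2), which is increasing on [0, +∞) with limit +∞, so that (q♯)⁻¹(x) is well defined. Then for every t > (q♯)⁻¹(x) one has Δ(t, x) = (0, p₀(t, x)) with p₀(t, x) ∈ [√2, 2); moreover p₀(t, x) → √2 as t → +∞. -/

import Mathlib

open Real Set Filter MeasureTheory
open scoped Topology

/-- The potential `g` from the Hamiltonian `H(x,p) = p²/2 + g(x)`. -/
noncomputable def g (x : ℝ) : ℝ := if |x| ≤ 1 then 1 - (1 - x ^ 2) ^ 4 else 1

/-- The derivative of `g`. -/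
noncomputable def g' (x : ℝ) : ℝ := if |x| ≤ 1 then 8 * x * (1 - x ^ 2) ^ 3 else 0

/-- `(q, p)` is a (global) solution of the Hamiltonian system (HS): `q̇ = p`, `ṗ = -g'(q)`. -/
def IsHSSol (q p : ℝ → ℝ) : Prop :=
  (∀ t : ℝ, HasDerivAt q (p t) t) ∧ (∀ t : ℝ, HasDerivAt p (-(g' (q t))) t)

/-- `F` is the flow of (HS): `F t q₀ p₀ = (q t, p t)` for the solution with data `(q₀, p₀)`. -/
def IsHSFlow (F : ℝ → ℝ → ℝ → ℝ × ℝ) : Prop :=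
  ∀ q₀ p₀ : ℝ,
    IsHSSol (fun t => (F t q₀ p₀).1) (fun t => (F t q₀ p₀).2) ∧ F 0 q₀ p₀ = (q₀, p₀)

/-- The set `([0,∞) × {2}) ∪ ({0} × (0,2])`, codomain of the map `Δ`. -/
def Dset : Set (ℝ × ℝ) := (Ici (0:ℝ) ×ˢ ({2} : Set ℝ)) ∪ ({(0:ℝ)} ×ˢ Ioc (0:ℝ) 2)

/-- `T` is the smallest positive period of `q`. -/
def IsSmallestPeriod (q : ℝ → ℝ) (T : ℝ) : Prop :=
  0 < T ∧ Function.Periodic q T ∧ ∀ T' : ℝ, 0 < T' → Function.Periodic q T' → T ≤ T'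

/-- `T` is the period map `𝒯`, assigning to `p₀ ∈ (0, √2)` the smallest positive period of
the `q`-component of the solution of (HS) with initial datum `(0, p₀)`. -/
def IsPeriodMap (F : ℝ → ℝ → ℝ → ℝ × ℝ) (T : ℝ → ℝ) : Prop :=
  ∀ p₀ ∈ Ioo (0:ℝ) (Real.sqrt 2), IsSmallestPeriod (fun t => (F t 0 p₀).1) (T p₀)

/-- `Δ` associates to `(t,x)` the datum in `Dset` whose orbit stays positive on `(0,t)`
and reaches `x` at time `t`. -/
def IsDeltaMap (F : ℝ → ℝ → ℝ → ℝ × ℝ) (Δ : ℝ → ℝ → ℝ × ℝ) : Prop :=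
  ∀ t x : ℝ, 0 < t → 0 < x →
    Δ t x ∈ Dset ∧ (F t (Δ t x).1 (Δ t x).2).1 = x ∧
      ∀ s ∈ Ioo (0:ℝ) t, 0 < (F s (Δ t x).1 (Δ t x).2).1

/-- The solution `u` of the conservation law built from the flow `F` and the map `Δ`
(extended by `0` at `x = 0`). -/
noncomputable def usol (F : ℝ → ℝ → ℝ → ℝ × ℝ) (Δ : ℝ → ℝ → ℝ × ℝ) (t x : ℝ) : ℝ :=
  if 0 < x then (F t (Δ t x).1 (Δ t x).2).2
  else if x < 0 then -(F t (Δ t (-x)).1 (Δ t (-x)).2).2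
  else 0

/-!
The argument works for `q̇ = p`, `ṗ = -V'(q)` with any potential `V` that has its minimum over
`[0, ∞)` at `0` and its maximum at `x`. An orbit of energy above `max V` keeps a positive
momentum, bounded away from zero, so its position solves the scalar equation `q̇ = √(2 (E - V(q)))`;
such orbits are ordered by their starting point and energy. Hence an orbit starting in
`[0, ∞) × {P}` is at time `t` at or beyond the orbit `q♯` from `(0, P)`, and it cannot be at `x`
once `q♯` has passed `x`. So `Δ(t, x) = (0, p₀)` with `p₀ < P`, and conservation of energy gives
`p₀² ≥ 2 (V x - V 0)`. Conversely the momentum of that orbit is at least `√(p₀² - 2 (V x - V 0))`,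
and travelling only the distance `x` in time `t` forces `p₀² - 2 (V x - V 0) ≤ (x / t)²`.
-/

theorem hasDerivAt_max_zero_pow (n : ℕ) (y : ℝ) :
    HasDerivAt (fun z : ℝ => max z 0 ^ (n + 2)) ((n + 2) * max y 0 ^ (n + 1)) y := by
  refine hasDerivAt_of_hasDerivAt_of_ne' (f := fun z : ℝ => max z 0 ^ (n + 2))
    (g := fun z => (n + 2) * max z 0 ^ (n + 1)) (x := 0) (fun z hz => ?_)
    (by fun_prop) (by fun_prop) y
  rcases hz.lt_or_gt with hneg | hpos
  · have hzero : (fun w : ℝ => max w 0 ^ (n + 2)) =ᶠ[𝓝 z] fun _ => 0 := by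
      filter_upwards [Iio_mem_nhds hneg] with w hw
      simp [max_eq_right (mem_Iio.1 hw).le]
    simpa [max_eq_right hneg.le] using (hasDerivAt_const z (0 : ℝ)).congr_of_eventuallyEq hzero
  · have hpow : (fun w : ℝ => max w 0 ^ (n + 2)) =ᶠ[𝓝 z] fun w => w ^ (n + 2) := by
      filter_upwards [Ioi_mem_nhds hpos] with w hw
      rw [max_eq_left (mem_Ioi.1 hw).le]
    simpa [max_eq_left hpos.le] using (hasDerivAt_pow (n + 2) z).congr_of_eventuallyEq hpow

theorem pos_of_continuous_of_ne_zero {X : Type*} [TopologicalSpace X] [PreconnectedSpace X]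
    {f : X → ℝ} (hf : Continuous f) (hne : ∀ x, f x ≠ 0) {a : X} (ha : 0 < f a) (x : X) :
    0 < f x := by
  by_contra! hx
  obtain ⟨y, hy⟩ := mem_range_of_exists_le_of_exists_ge hf ⟨x, hx⟩ ⟨a, ha.le⟩
  exact hne y hy

/- Separation of variables: if `G' = 1 / v`, then `G ∘ q` has slope `1` and `G ∘ Q` has slope at
least `1`. No Lipschitz condition on `v` is needed. -/
theorem le_of_hasDerivAt_of_le_deriv_of_pos {v q Q Q' : ℝ → ℝ} (hv : Continuous v)
    (hpos : ∀ y, 0 < v y) (hq : ∀ t, HasDerivAt q (v (q t)) t) (hQ : ∀ t, HasDerivAt Q (Q' t) t)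
    (hle : ∀ t, v (Q t) ≤ Q' t) {a t : ℝ} (hat : a ≤ t) (hinit : q a ≤ Q a) : q t ≤ Q t := by
  let G : ℝ → ℝ := fun u => ∫ y in (0 : ℝ)..u, (v y)⁻¹
  have hG : ∀ u, HasDerivAt G (v u)⁻¹ u := fun u =>
    ((hv.inv₀ fun y => (hpos y).ne').integral_hasStrictDerivAt 0 u).hasDerivAt
  have hGmono : StrictMono G := strictMono_of_deriv_pos fun u => by
    rw [(hG u).deriv]
    exact inv_pos.2 (hpos u)
  have hdiff : ∀ s, HasDerivAt (fun s => G (Q s) - G (q s))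
      ((v (Q s))⁻¹ * Q' s - (v (q s))⁻¹ * v (q s)) s := fun s =>
    ((hG (Q s)).comp s (hQ s)).sub ((hG (q s)).comp s (hq s))
  have hdiff_mono : Monotone fun s => G (Q s) - G (q s) :=
    monotone_of_deriv_nonneg (fun s => (hdiff s).differentiableAt) fun s => by
      rw [(hdiff s).deriv, inv_mul_cancel₀ (hpos _).ne', sub_nonneg, ← div_eq_inv_mul,
        one_le_div (hpos _)]
      exact hle s
  have hmono_at : G (Q a) - G (q a) ≤ G (Q t) - G (q t) := hdiff_mono hat
  exact hGmono.le_iff_le.1 (by linarith [hGmono.monotone hinit])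

/-- `(q, p)` is a global solution of the Hamiltonian system `q̇ = p`, `ṗ = -V'(q)` of the potential
`V`. The force is written with `deriv`, so the results below assume `V` differentiable. -/
structure IsNewtonSol (V q p : ℝ → ℝ) : Prop where
  hasDerivAt_position (t : ℝ) : HasDerivAt q (p t) t
  hasDerivAt_momentum (t : ℝ) : HasDerivAt p (-deriv V (q t)) t

/-- `F` is the flow of `q̇ = p`, `ṗ = -V'(q)`: `F t q₀ p₀` is the state at time `t` of the solution
with initial datum `(q₀, p₀)`. -/
structure IsNewtonFlow (V : ℝ → ℝ) (F : ℝ → ℝ → ℝ → ℝ × ℝ) : Prop where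
  isNewtonSol (q₀ p₀ : ℝ) : IsNewtonSol V (fun t => (F t q₀ p₀).1) (fun t => (F t q₀ p₀).2)
  map_zero (q₀ p₀ : ℝ) : F 0 q₀ p₀ = (q₀, p₀)

/-- The Hamiltonian of a unit mass in the potential `V`, at the state `(q, p)`. -/
noncomputable def energy (V : ℝ → ℝ) (q p : ℝ) : ℝ := p ^ 2 / 2 + V q

/-- The admissible initial data: momentum `P` on the half-line `q ≥ 0`, or position `0` with
positive momentum at most `P`. For `P = 2` this is `Dset`. -/
def entrySet (P : ℝ) : Set (ℝ × ℝ) := (Ici 0 ×ˢ {P}) ∪ ({0} ×ˢ Ioc 0 P)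

theorem snd_pos_of_mem_entrySet {P : ℝ} (hP : 0 < P) {d : ℝ × ℝ} (hd : d ∈ entrySet P) :
    0 < d.2 := by
  rcases hd with ⟨-, hd⟩ | ⟨-, hd⟩
  · exact hP.trans_eq (mem_singleton_iff.1 hd).symm
  · exact hd.1

namespace IsNewtonSol

variable {V q p : ℝ → ℝ}

theorem energy_eq (h : IsNewtonSol V q p) (hV : Differentiable ℝ V) (s t : ℝ) :
    energy V (q s) (p s) = energy V (q t) (p t) := by
  have hderiv : ∀ t, HasDerivAt (fun t => energy V (q t) (p t)) 0 t := fun t => by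
    have hkin := ((h.hasDerivAt_momentum t).pow 2).div_const 2
    have hpot := (hV (q t)).hasDerivAt.comp t (h.hasDerivAt_position t)
    exact (hkin.add hpot).congr_deriv (by push_cast; ring)
  exact is_const_of_deriv_eq_zero (fun t => (hderiv t).differentiableAt)
    (fun t => (hderiv t).deriv) s t

variable {M a : ℝ}

theorem momentum_pos (h : IsNewtonSol V q p) (hV : Differentiable ℝ V) (hM : ∀ y, V y ≤ M)
    (hE : M < energy V (q a) (p a)) (ha : 0 < p a) (t : ℝ) : 0 < p t := by
  have hcont : Continuous p :=
    continuous_iff_continuousAt.2 fun s => (h.hasDerivAt_momentum s).continuousAt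
  refine pos_of_continuous_of_ne_zero hcont (fun s hs => ?_) ha t
  rw [h.energy_eq hV a s, energy, hs] at hE
  linarith [hM (q s)]

theorem momentum_eq_sqrt (h : IsNewtonSol V q p) (hV : Differentiable ℝ V) {t : ℝ}
    (ht : 0 ≤ p t) (a : ℝ) : p t = √(2 * (energy V (q a) (p a) - V (q t))) := by
  rw [h.energy_eq hV a t, energy, add_sub_cancel_right, mul_div_cancel₀ _ two_ne_zero,
    Real.sqrt_sq ht]

theorem sqrt_energy_sub_le_momentum (h : IsNewtonSol V q p) (hV : Differentiable ℝ V)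
    (hM : ∀ y, V y ≤ M) (hE : M < energy V (q a) (p a)) (ha : 0 < p a) (t : ℝ) :
    √(2 * (energy V (q a) (p a) - M)) ≤ p t := by
  rw [h.momentum_eq_sqrt hV (h.momentum_pos hV hM hE ha t).le a]
  gcongr
  exact hM (q t)

theorem sqrt_mul_le_position_sub (h : IsNewtonSol V q p) (hV : Differentiable ℝ V)
    (hM : ∀ y, V y ≤ M) (hE : M < energy V (q a) (p a)) (ha : 0 < p a) {t : ℝ} (hat : a ≤ t) :
    √(2 * (energy V (q a) (p a) - M)) * (t - a) ≤ q t - q a :=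
  mul_sub_le_image_sub_of_le_deriv (fun s => (h.hasDerivAt_position s).differentiableAt)
    (fun s => (h.hasDerivAt_position s).deriv ▸ h.sqrt_energy_sub_le_momentum hV hM hE ha s) hat

theorem two_mul_energy_sub_le_sq_slope (h : IsNewtonSol V q p) (hV : Differentiable ℝ V)
    (hM : ∀ y, V y ≤ M) (ha : 0 < p a) {t : ℝ} (hat : a < t) :
    2 * (energy V (q a) (p a) - M) ≤ ((q t - q a) / (t - a)) ^ 2 := by
  rcases le_or_gt (energy V (q a) (p a)) M with hE | hE
  · linarith [sq_nonneg ((q t - q a) / (t - a))]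
  · have hspeed : √(2 * (energy V (q a) (p a) - M)) ≤ (q t - q a) / (t - a) :=
      (le_div_iff₀ (sub_pos.2 hat)).2 (h.sqrt_mul_le_position_sub hV hM hE ha hat.le)
    exact (Real.sqrt_le_iff.1 hspeed).2

theorem strictMono_position (h : IsNewtonSol V q p) (hV : Differentiable ℝ V)
    (hM : ∀ y, V y ≤ M) (hE : M < energy V (q a) (p a)) (ha : 0 < p a) : StrictMono q :=
  strictMono_of_deriv_pos fun t =>
    (h.hasDerivAt_position t).deriv ▸ h.momentum_pos hV hM hE ha t

theorem tendsto_position_atTop (h : IsNewtonSol V q p) (hV : Differentiable ℝ V)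
    (hM : ∀ y, V y ≤ M) (hE : M < energy V (q a) (p a)) (ha : 0 < p a) :
    Tendsto q atTop atTop := by
  have hspeed : 0 < √(2 * (energy V (q a) (p a) - M)) := Real.sqrt_pos.2 (by linarith)
  have hline : Tendsto (fun t => √(2 * (energy V (q a) (p a) - M)) * (t - a) + q a) atTop atTop :=
    tendsto_atTop_add_const_right _ _
      ((tendsto_atTop_add_const_right _ (-a) tendsto_id).const_mul_atTop hspeed)
  refine tendsto_atTop_mono' atTop ?_ hline
  filter_upwards [eventually_ge_atTop a] with t hat
  linarith [h.sqrt_mul_le_position_sub hV hM hE ha hat]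

theorem position_le_position {Q P : ℝ → ℝ} (h : IsNewtonSol V q p) (H : IsNewtonSol V Q P)
    (hV : Differentiable ℝ V) (hM : ∀ y, V y ≤ M) (hE : M < energy V (q a) (p a))
    (hle : energy V (q a) (p a) ≤ energy V (Q a) (P a)) (hp : 0 < p a) (hP : 0 < P a)
    (hinit : q a ≤ Q a) {t : ℝ} (hat : a ≤ t) : q t ≤ Q t := by
  have hvcont : Continuous fun y => √(2 * (energy V (q a) (p a) - V y)) := by
    have := hV.continuous
    fun_prop
  have hvpos : ∀ y, 0 < √(2 * (energy V (q a) (p a) - V y)) := fun y =>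
    Real.sqrt_pos.2 (by linarith [hM y])
  refine le_of_hasDerivAt_of_le_deriv_of_pos hvcont hvpos (fun s => ?_) H.hasDerivAt_position
    (fun s => ?_) hat hinit
  · rw [← h.momentum_eq_sqrt hV (h.momentum_pos hV hM hE hp s).le a]
    exact h.hasDerivAt_position s
  · rw [H.momentum_eq_sqrt hV (H.momentum_pos hV hM (hE.trans_le hle) hP s).le a]
    gcongr

theorem sqrt_potential_sub_le_momentum (h : IsNewtonSol V q p) (hV : Differentiable ℝ V)
    (ha : 0 ≤ p a) (t : ℝ) : √(2 * (V (q t) - V (q a))) ≤ p a := by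
  have henergy := h.energy_eq hV a t
  rw [energy, energy] at henergy
  exact (Real.sqrt_le_left ha).2 (by linarith [sq_nonneg (p t)])

end IsNewtonSol

namespace IsNewtonFlow

variable {V : ℝ → ℝ} {F : ℝ → ℝ → ℝ → ℝ × ℝ} {P x : ℝ}

theorem lt_energy_zero (hF : IsNewtonFlow V F) (hP : 2 * (V x - V 0) < P ^ 2) :
    V x < energy V (F 0 0 P).1 (F 0 0 P).2 := by
  rw [hF.map_zero, energy]
  linarith

theorem position_zero_le_position (hF : IsNewtonFlow V F) (hV : Differentiable ℝ V)
    (hmax : ∀ y, V y ≤ V x) (hP₀ : 0 < P) (hP : 2 * (V x - V 0) < P ^ 2) {q₀ t : ℝ}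
    (hq₀ : 0 ≤ q₀) (hVq₀ : V 0 ≤ V q₀) (ht : 0 ≤ t) : (F t 0 P).1 ≤ (F t q₀ P).1 := by
  refine (hF.isNewtonSol 0 P).position_le_position (hF.isNewtonSol q₀ P) hV hmax
    (hF.lt_energy_zero hP) ?_ ?_ ?_ ?_ ht
  all_goals simpa [hF.map_zero, energy]

theorem eq_zero_and_mem_Ico_of_mem_entrySet (hF : IsNewtonFlow V F) (hV : Differentiable ℝ V)
    (hmin : ∀ y, 0 ≤ y → V 0 ≤ V y) (hmax : ∀ y, V y ≤ V x) (hP₀ : 0 < P)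
    (hP : 2 * (V x - V 0) < P ^ 2) {q₀ p₀ t : ℝ} (ht : 0 ≤ t) (hmem : (q₀, p₀) ∈ entrySet P)
    (hreach : (F t q₀ p₀).1 = x) (hpassed : x < (F t 0 P).1) :
    q₀ = 0 ∧ p₀ ∈ Ico √(2 * (V x - V 0)) P := by
  have hne : 0 ≤ q₀ → p₀ ≠ P := by
    rintro hq₀ rfl
    have := hF.position_zero_le_position hV hmax hP₀ hP hq₀ (hmin q₀ hq₀) ht
    linarith
  rcases hmem with ⟨hq₀, hp₀⟩ | ⟨hq₀, hp₀⟩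
  · exact absurd hp₀ (hne hq₀)
  · obtain rfl : q₀ = 0 := hq₀
    refine ⟨rfl, ?_, hp₀.2.lt_of_ne (hne le_rfl)⟩
    simpa only [hF.map_zero, hreach] using (hF.isNewtonSol 0 p₀).sqrt_potential_sub_le_momentum
      (a := 0) hV (by simpa only [hF.map_zero] using hp₀.1.le) t

theorem le_sqrt_of_position_eq (hF : IsNewtonFlow V F) (hV : Differentiable ℝ V)
    (hmax : ∀ y, V y ≤ V x) {p₀ t : ℝ} (hp₀ : 0 < p₀) (ht : 0 < t) (hreach : (F t 0 p₀).1 = x) :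
    p₀ ≤ √(2 * (V x - V 0) + (x / t) ^ 2) := by
  have hslope := (hF.isNewtonSol 0 p₀).two_mul_energy_sub_le_sq_slope hV hmax
    (by simpa [hF.map_zero] using hp₀) ht
  simp only [hF.map_zero, hreach, energy, sub_zero] at hslope
  exact (Real.le_sqrt' hp₀).2 (by linarith)

end IsNewtonFlow

theorem tendsto_sqrt_add_div_sq_atTop (a x : ℝ) :
    Tendsto (fun t => √(a + (x / t) ^ 2)) atTop (𝓝 √a) := by
  have hdiv : Tendsto (fun t : ℝ => x / t) atTop (𝓝 0) := tendsto_const_nhds.div_atTop tendsto_id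
  simpa using ((hdiv.pow 2).const_add a).sqrt

theorem stmt_13_general {V : ℝ → ℝ} (hV : Differentiable ℝ V) {P x : ℝ} (hx : 0 ≤ x)
    (hmin : ∀ y, 0 ≤ y → V 0 ≤ V y) (hmax : ∀ y, V y ≤ V x) (hP₀ : 0 < P)
    (hP : 2 * (V x - V 0) < P ^ 2) {F : ℝ → ℝ → ℝ → ℝ × ℝ} (hF : IsNewtonFlow V F)
    {δ : ℝ → ℝ × ℝ}
    (hδ : ∀ t, 0 < t → δ t ∈ entrySet P ∧ (F t (δ t).1 (δ t).2).1 = x) :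
    StrictMonoOn (fun t => (F t 0 P).1) (Ici 0) ∧
    Tendsto (fun t => (F t 0 P).1) atTop atTop ∧
    (∃ tx : ℝ, 0 ≤ tx ∧ (F tx 0 P).1 = x) ∧
    ∀ tx : ℝ, 0 ≤ tx → (F tx 0 P).1 = x →
      (∀ t : ℝ, tx < t → ∃ p₀ : ℝ, p₀ ∈ Ico √(2 * (V x - V 0)) P ∧ δ t = (0, p₀)) ∧
      Tendsto (fun t => (δ t).2) atTop (𝓝 √(2 * (V x - V 0))) := by
  have hsol := hF.isNewtonSol 0 P
  have hE := hF.lt_energy_zero hP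
  have hmom : 0 < (F 0 0 P).2 := by rwa [hF.map_zero]
  have hmono := hsol.strictMono_position hV hmax hE hmom
  have htop := hsol.tendsto_position_atTop hV hmax hE hmom
  have hcont : ContinuousOn (fun t => (F t 0 P).1) (Ici 0) := fun t _ =>
    (hsol.hasDerivAt_position t).continuousAt.continuousWithinAt
  refine ⟨hmono.strictMonoOn _, htop, ?_, fun tx htx hxe => ?_⟩
  · exact intermediate_value_Ici hcont htop (by simpa [hF.map_zero] using hx)
  have hdatum : ∀ t, tx < t → (δ t).1 = 0 ∧ (δ t).2 ∈ Ico √(2 * (V x - V 0)) P := fun t ht =>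
    hF.eq_zero_and_mem_Ico_of_mem_entrySet hV hmin hmax hP₀ hP (htx.trans ht.le)
      (hδ t (htx.trans_lt ht)).1 (hδ t (htx.trans_lt ht)).2 (hxe ▸ hmono ht)
  refine ⟨fun t ht => ⟨(δ t).2, (hdatum t ht).2, Prod.ext (hdatum t ht).1 rfl⟩, ?_⟩
  refine tendsto_of_tendsto_of_tendsto_of_le_of_le' tendsto_const_nhds
    (tendsto_sqrt_add_div_sq_atTop (2 * (V x - V 0)) x) ?_ ?_
  · filter_upwards [eventually_gt_atTop tx] with t ht using (hdatum t ht).2.1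
  · filter_upwards [eventually_gt_atTop tx] with t ht
    obtain ⟨hmem, hreach⟩ := hδ t (htx.trans_lt ht)
    rw [(hdatum t ht).1] at hreach
    exact hF.le_sqrt_of_position_eq hV hmax (snd_pos_of_mem_entrySet hP₀ hmem) (htx.trans_lt ht)
      hreach

theorem abs_le_one_iff_one_sub_sq_nonneg (x : ℝ) : |x| ≤ 1 ↔ 0 ≤ 1 - x ^ 2 := by
  rw [sub_nonneg, sq_le_one_iff_abs_le_one]

theorem g_eq_one_sub_max_pow (x : ℝ) : g x = 1 - max (1 - x ^ 2) 0 ^ 4 := by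
  simp only [g, abs_le_one_iff_one_sub_sq_nonneg]
  split_ifs with h
  · rw [max_eq_left h]
  · simp [max_eq_right (not_le.1 h).le]

theorem g'_eq_mul_max_pow (x : ℝ) : g' x = 8 * x * max (1 - x ^ 2) 0 ^ 3 := by
  simp only [g', abs_le_one_iff_one_sub_sq_nonneg]
  split_ifs with h
  · rw [max_eq_left h]
  · simp [max_eq_right (not_le.1 h).le]

theorem hasDerivAt_g (x : ℝ) : HasDerivAt g (g' x) x := by
  have hinner : HasDerivAt (fun x : ℝ => 1 - x ^ 2) (-(2 * x)) x := by
    simpa using (hasDerivAt_pow 2 x).const_sub 1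
  have houter := ((hasDerivAt_max_zero_pow 2 (1 - x ^ 2)).comp x hinner).const_sub 1
  rw [funext g_eq_one_sub_max_pow, g'_eq_mul_max_pow]
  exact houter.congr_deriv (by push_cast; ring)

theorem g_le_one (x : ℝ) : g x ≤ 1 := by
  rw [g_eq_one_sub_max_pow, sub_le_self_iff]
  positivity

theorem g_nonneg (x : ℝ) : 0 ≤ g x := by
  rw [g_eq_one_sub_max_pow, sub_nonneg]
  exact pow_le_one₀ (le_max_right _ _) (max_le (by linarith [sq_nonneg x]) zero_le_one)

theorem g_zero : g 0 = 0 := by simp [g]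

theorem g_of_one_le {x : ℝ} (hx : 1 ≤ x) : g x = 1 := by
  have hsq : 1 - x ^ 2 ≤ 0 := sub_nonpos.2 (one_le_pow₀ hx)
  simp [g_eq_one_sub_max_pow, max_eq_right hsq]

theorem IsHSFlow.isNewtonFlow {F : ℝ → ℝ → ℝ → ℝ × ℝ} (hF : IsHSFlow F) : IsNewtonFlow g F where
  isNewtonSol q₀ p₀ :=
    ⟨(hF q₀ p₀).1.1, fun t => (hasDerivAt_g _).deriv.symm ▸ (hF q₀ p₀).1.2 t⟩
  map_zero q₀ p₀ := (hF q₀ p₀).2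

/-- For `x ≥ 1`, with `q♯(t) = F_q(t,0,2)` increasing on `[0,∞)` with limit `+∞` (so that
`(q♯)⁻¹(x)` is well defined): for every `t > (q♯)⁻¹(x)`, `Δ(t,x) = (0, p₀(t,x))` with
`p₀(t,x) ∈ [√2, 2)`; moreover `p₀(t,x) → √2` as `t → +∞`. -/
theorem stmt_13 (F : ℝ → ℝ → ℝ → ℝ × ℝ) (hF : IsHSFlow F)
    (Δ : ℝ → ℝ → ℝ × ℝ) (hΔ : IsDeltaMap F Δ)
    (x : ℝ) (hx : 1 ≤ x) :
    StrictMonoOn (fun t => (F t 0 2).1) (Ici 0) ∧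
    Tendsto (fun t => (F t 0 2).1) atTop atTop ∧
    (∃ tx : ℝ, 0 ≤ tx ∧ (F tx 0 2).1 = x) ∧
    ∀ tx : ℝ, 0 ≤ tx → (F tx 0 2).1 = x →
      (∀ t : ℝ, tx < t →
        ∃ p₀ : ℝ, p₀ ∈ Ico (Real.sqrt 2) 2 ∧ Δ t x = (0, p₀)) ∧
      Tendsto (fun t => (Δ t x).2) atTop (𝓝 (Real.sqrt 2)) := by
  have hgap : 2 * (g x - g 0) = 2 := by rw [g_of_one_le hx, g_zero, sub_zero, mul_one]
  have hx₀ : 0 < x := zero_lt_one.trans_le hx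
  have hmin : ∀ y, 0 ≤ y → g 0 ≤ g y := fun y _ => g_zero.trans_le (g_nonneg y)
  have hmax : ∀ y, g y ≤ g x := fun y => (g_le_one y).trans_eq (g_of_one_le hx).symm
  simpa only [hgap] using stmt_13_general (fun y => (hasDerivAt_g y).differentiableAt) hx₀.le
    hmin hmax two_pos (by rw [hgap]; norm_num) hF.isNewtonFlow
    fun t ht => ⟨(hΔ t x ht hx₀).1, (hΔ t x ht hx₀).2.1⟩
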